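/- Let 1/2 < γ ≤ 1, let Ω ⊆ ℝ^m be open, and let f : Ω → ℝ^{2n+1} be locally γ-Hölder continuous with respect to the Euclidean metrics. Then f is locally γ-Hölder continuous as a map into ℍ^n (with respect to the Korányi metric) if and only if f^*α = 0 in the distributional sense, i.e. for every smooth compactly supported vector field Φ : Ω → ℝ^m one has lim_{ε→0+} ∫_Ω ⟨(f_ε^*α)(x), Φ(x)⟩ dx = 0, where f_ε = f * η_ε is the standard ε-mollification of f (the integrals being defined for all ε smaller than the distance from the support of Φ to the complement of Ω). -/

import Mathlib

open Metric Set MeasureTheory Topology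

/-- The index of the coordinate `x_j` in `ℝ^{2n+1}`. -/
def xI (n : ℕ) (j : Fin n) : Fin (2*n+1) := ⟨2*j.1, by have := j.2; omega⟩

/-- The index of the coordinate `y_j` in `ℝ^{2n+1}`. -/
def yI (n : ℕ) (j : Fin n) : Fin (2*n+1) := ⟨2*j.1+1, by have := j.2; omega⟩

/-- The index of the coordinate `t` in `ℝ^{2n+1}`. -/
def tI (n : ℕ) : Fin (2*n+1) := Fin.last (2*n)

/-- The Korányi metric on the Heisenberg group `ℍ^n = ℝ^{2n+1}`:
`d_K(p,q) = (|z-z'|^4 + |t - t' + 2 ∑_j (x_j' y_j - x_j y_j')|^2)^{1/4}`. -/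
noncomputable def dK (n : ℕ) (p q : EuclideanSpace ℝ (Fin (2*n+1))) : ℝ :=
  ((∑ i : Fin (2*n), (p (Fin.castSucc i) - q (Fin.castSucc i)) ^ 2) ^ 2 +
    (p (tI n) - q (tI n) +
      2 * ∑ j : Fin n, (q (xI n j) * p (yI n j) - p (xI n j) * q (yI n j))) ^ 2) ^ ((1:ℝ)/4)

/-- The Euclidean distance between the projections of `p, q ∈ ℝ^{2n+1}` onto the first
`2n` coordinates. -/
noncomputable def edistProj (n : ℕ) (p q : EuclideanSpace ℝ (Fin (2*n+1))) : ℝ :=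
  Real.sqrt (∑ i : Fin (2*n), (p (Fin.castSucc i) - q (Fin.castSucc i)) ^ 2)

/-- The `ε`-mollification `f_ε = f * η_ε` of `f`, where `η_ε(z) = ε^{-m} η(z/ε)`. -/
noncomputable def mollify (m d : ℕ) (η : EuclideanSpace ℝ (Fin m) → ℝ) (ε : ℝ)
    (f : EuclideanSpace ℝ (Fin m) → EuclideanSpace ℝ (Fin d))
    (p : EuclideanSpace ℝ (Fin m)) : EuclideanSpace ℝ (Fin d) :=
  ∫ z, ((ε ^ m)⁻¹ * η (ε⁻¹ • z)) • f (p - z)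

/-- The pullback `g^*α` of the standard contact form
`α = dt + 2 ∑_j (x_j dy_j - y_j dx_j)`, identified with the `ℝ^m`-valued map
`g^*α(p) = ∇g^t(p) + 2 ∑_j (g^{x_j}(p)·∇g^{y_j}(p) - g^{y_j}(p)·∇g^{x_j}(p))`. -/
noncomputable def pullA (n m : ℕ)
    (g : EuclideanSpace ℝ (Fin m) → EuclideanSpace ℝ (Fin (2*n+1)))
    (p : EuclideanSpace ℝ (Fin m)) : EuclideanSpace ℝ (Fin m) :=
  gradient (fun q => g q (tI n)) p +
    (2:ℝ) • ∑ j : Fin n,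
      (g p (xI n j) • gradient (fun q => g q (yI n j)) p -
        g p (yI n j) • gradient (fun q => g q (xI n j)) p)

open scoped RealInnerProductSpace

/-- Dyadic sewing: a two-parameter function whose midpoint additivity defect is
`O(|b - a| ^ (2γ))` with `2γ > 1`, and which is quadratically small, is itself
`O(|b - a| ^ (2γ))`, with a constant that only depends on `γ` and on the defect. -/
theorem exists_sewing_bound {γ : ℝ} (hγ : 1 / 2 < γ) :
    ∃ K : ℝ, 0 ≤ K ∧ ∀ (R : ℝ → ℝ → ℝ) (D M : ℝ), 0 ≤ D →
      (∀ a b, a ≤ b →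
        |R a b - R a ((a + b) / 2) - R ((a + b) / 2) b| ≤ D * (b - a) ^ (2 * γ)) →
      (∀ a b, a ≤ b → |R a b| ≤ M * (b - a) ^ 2) →
      ∀ a b, a ≤ b → |R a b| ≤ K * D * (b - a) ^ (2 * γ) := by
  set θ : ℝ := 2 * (1 / 2 : ℝ) ^ (2 * γ) with hθ
  have hθ1 : θ < 1 := by
    have : (1 / 2 : ℝ) ^ (2 * γ) < (1 / 2 : ℝ) ^ (1 : ℝ) :=
      Real.rpow_lt_rpow_of_exponent_gt (by norm_num) (by norm_num) (by linarith)
    rw [Real.rpow_one] at this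
    linarith
  have hK : 0 < 1 - θ := by linarith
  refine ⟨1 / (1 - θ), by positivity, fun R D M hD hdef hquad => ?_⟩
  set K := 1 / (1 - θ) with hKdef
  have hKθ : θ * K + 1 = K := by rw [hKdef]; field_simp; ring
  have key : ∀ k : ℕ, ∀ a b, a ≤ b →
      |R a b| ≤ K * D * (b - a) ^ (2 * γ) + M * (1 / 2) ^ k * (b - a) ^ 2 := by
    intro k
    induction k with
    | zero =>
      intro a b hab
      have h0 : 0 ≤ K * D * (b - a) ^ (2 * γ) := by
        have : 0 ≤ (b - a) ^ (2 * γ) := Real.rpow_nonneg (by linarith) _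
        positivity
      have := hquad a b hab
      simp only [pow_zero, mul_one]
      linarith
    | succ k ih =>
      intro a b hab
      have h1 := ih a ((a + b) / 2) (by linarith)
      have h2 := ih ((a + b) / 2) b (by linarith)
      have h3 := hdef a b hab
      have e1 : (a + b) / 2 - a = 1 / 2 * (b - a) := by ring
      have e2 : b - (a + b) / 2 = 1 / 2 * (b - a) := by ring
      rw [e1, Real.mul_rpow (by norm_num) (by linarith)] at h1
      rw [e2, Real.mul_rpow (by norm_num) (by linarith)] at h2
      have h4 : |R a b| ≤ |R a b - R a ((a + b) / 2) - R ((a + b) / 2) b|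
          + |R a ((a + b) / 2)| + |R ((a + b) / 2) b| := by
        have := abs_add_three (R a b - R a ((a + b) / 2) - R ((a + b) / 2) b)
          (R a ((a + b) / 2)) (R ((a + b) / 2) b)
        rwa [show R a b - R a ((a + b) / 2) - R ((a + b) / 2) b + R a ((a + b) / 2)
          + R ((a + b) / 2) b = R a b by ring] at this
      calc |R a b| ≤ (θ * K + 1) * D * (b - a) ^ (2 * γ)
            + M * (1 / 2) ^ (k + 1) * (b - a) ^ 2 := by
            rw [hθ, pow_succ]; linarith
        _ = _ := by rw [hKθ]
  intro a b hab
  have hlim : Filter.Tendsto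
      (fun k : ℕ => K * D * (b - a) ^ (2 * γ) + M * (1 / 2) ^ k * (b - a) ^ 2)
      Filter.atTop (𝓝 (K * D * (b - a) ^ (2 * γ) + M * 0 * (b - a) ^ 2)) :=
    (((tendsto_pow_atTop_nhds_zero_of_lt_one (by norm_num) (by norm_num)).const_mul M).mul_const
      _).const_add _
  simpa using ge_of_tendsto' hlim fun k => key k a b hab

/-- The symplectic part `w ↦ 2 ∑_j (q^{x_j} w^{y_j} - q^{y_j} w^{x_j})` of the contact form
at `q`. -/
noncomputable def symplecticForm (n : ℕ) (q : EuclideanSpace ℝ (Fin (2*n+1))) :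
    EuclideanSpace ℝ (Fin (2*n+1)) →L[ℝ] ℝ :=
  (2 : ℝ) • ∑ j : Fin n,
    (q (xI n j) • EuclideanSpace.proj (yI n j)
      - q (yI n j) • EuclideanSpace.proj (xI n j))

theorem symplecticForm_apply (n : ℕ) (q w : EuclideanSpace ℝ (Fin (2*n+1))) :
    symplecticForm n q w =
      2 * ∑ j : Fin n, (q (xI n j) * w (yI n j) - q (yI n j) * w (xI n j)) := by
  simp [symplecticForm]

/-- The contact form `dt + 2 ∑_j (x_j dy_j - y_j dx_j)` at `q`, as a linear functional. -/
noncomputable def contactForm (n : ℕ) (q : EuclideanSpace ℝ (Fin (2*n+1))) :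
    EuclideanSpace ℝ (Fin (2*n+1)) →L[ℝ] ℝ :=
  EuclideanSpace.proj (tI n) + symplecticForm n q

theorem contactForm_apply (n : ℕ) (q w : EuclideanSpace ℝ (Fin (2*n+1))) :
    contactForm n q w = w (tI n) + symplecticForm n q w := rfl

attribute [irreducible] symplecticForm contactForm

theorem symplecticForm_sub (n : ℕ) (p q w : EuclideanSpace ℝ (Fin (2*n+1))) :
    symplecticForm n (p - q) w = symplecticForm n p w - symplecticForm n q w := by
  simp only [symplecticForm_apply, PiLp.sub_apply, ← mul_sub, ← Finset.sum_sub_distrib]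
  congr 1
  exact Finset.sum_congr rfl fun j _ => by ring

theorem symplecticForm_self (n : ℕ) (q : EuclideanSpace ℝ (Fin (2*n+1))) :
    symplecticForm n q q = 0 := by
  rw [symplecticForm_apply, Finset.sum_eq_zero fun j _ => by ring, mul_zero]

theorem abs_symplecticForm_le (n : ℕ) (q w : EuclideanSpace ℝ (Fin (2*n+1))) :
    |symplecticForm n q w| ≤ 4 * n * ‖q‖ * ‖w‖ := by
  have hc : ∀ (v : EuclideanSpace ℝ (Fin (2*n+1))) i, |v i| ≤ ‖v‖ := fun v i => by
    simpa using PiLp.norm_apply_le v i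
  rw [symplecticForm_apply, abs_mul, abs_two]
  have hj : ∀ j ∈ (Finset.univ : Finset (Fin n)),
      |q (xI n j) * w (yI n j) - q (yI n j) * w (xI n j)| ≤ 2 * (‖q‖ * ‖w‖) := fun j _ => by
    refine (abs_sub _ _).trans ?_
    rw [abs_mul, abs_mul, _root_.two_mul (‖q‖ * ‖w‖)]
    gcongr <;> exact hc _ _
  have := (Finset.abs_sum_le_sum_abs _ _).trans (Finset.sum_le_sum hj)
  simp only [Finset.sum_const, Finset.card_univ, Fintype.card_fin, nsmul_eq_mul] at this
  linarith

theorem contactForm_sub_contactForm (n : ℕ) (p q w : EuclideanSpace ℝ (Fin (2*n+1))) :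
    contactForm n p w - contactForm n q w = symplecticForm n (p - q) w := by
  rw [contactForm_apply, contactForm_apply, symplecticForm_sub]
  ring

/-- The failure of `(p, q) ↦ contactForm n p (q - p)` to be additive along a chain of points is a
product of increments. -/
theorem contactForm_chain (n : ℕ) (p q r : EuclideanSpace ℝ (Fin (2*n+1))) :
    contactForm n p (r - p) - contactForm n p (q - p) - contactForm n q (r - q) =
      symplecticForm n (p - q) (r - q) := by
  rw [← contactForm_sub_contactForm, ← map_sub]
  congr 2
  abel

theorem Continuous.contactForm {X : Type*} [TopologicalSpace X] {n : ℕ}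
    {q w : X → EuclideanSpace ℝ (Fin (2*n+1))} (hq : Continuous q) (hw : Continuous w) :
    Continuous fun x => contactForm n (q x) (w x) := by
  simp only [contactForm_apply, symplecticForm_apply]
  fun_prop

theorem dK_eq (n : ℕ) (p q : EuclideanSpace ℝ (Fin (2*n+1))) :
    dK n p q = ((∑ i : Fin (2*n), (p (Fin.castSucc i) - q (Fin.castSucc i)) ^ 2) ^ 2 +
      contactForm n q (p - q) ^ 2) ^ ((1:ℝ)/4) := by
  rw [dK, contactForm_apply, map_sub, symplecticForm_self, sub_zero, symplecticForm_apply]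
  simp only [PiLp.sub_apply, mul_comm (p _) (q _)]

theorem abs_contactForm_le_dK_sq (n : ℕ) (p q : EuclideanSpace ℝ (Fin (2*n+1))) :
    |contactForm n q (p - q)| ≤ dK n p q ^ 2 := by
  rw [dK_eq, ← Real.rpow_natCast, ← Real.rpow_mul (by positivity)]
  norm_num
  rw [← Real.sqrt_eq_rpow]
  exact Real.abs_le_sqrt (by nlinarith [sq_nonneg <|
    (∑ i : Fin (2*n), (p (Fin.castSucc i) - q (Fin.castSucc i)) ^ 2)])

theorem dK_le (n : ℕ) (p q : EuclideanSpace ℝ (Fin (2*n+1))) {A B r : ℝ} (hr : 0 ≤ r)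
    (hA : dist p q ≤ A * r) (hB : |contactForm n q (p - q)| ≤ B * r ^ 2) :
    dK n p q ≤ (A ^ 4 + B ^ 2) ^ ((1:ℝ)/4) * r := by
  have h1 : ∑ i : Fin (2*n), (p (Fin.castSucc i) - q (Fin.castSucc i)) ^ 2 ≤ (A * r) ^ 2 := by
    have h2 : dist p q ^ 2 ≤ (A * r) ^ 2 := pow_le_pow_left₀ dist_nonneg hA 2
    rw [EuclideanSpace.dist_eq, Real.sq_sqrt (by positivity), Fin.sum_univ_castSucc] at h2
    simp only [Real.dist_eq, sq_abs] at h2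
    nlinarith [sq_nonneg (p (Fin.last (2*n)) - q (Fin.last (2*n)))]
  have hr4 : r = (r ^ 4) ^ ((1:ℝ)/4) := by
    rw [← Real.rpow_natCast, ← Real.rpow_mul hr]; norm_num
  rw [dK_eq]
  conv_rhs => rw [hr4, ← Real.mul_rpow (by positivity) (by positivity)]
  refine Real.rpow_le_rpow (by positivity) ?_ (by norm_num)
  have h3 := pow_le_pow_left₀ (by positivity) h1 2
  have h4 := pow_le_pow_left₀ (abs_nonneg _) hB 2
  rw [sq_abs] at h4
  nlinarith

/-- A smooth nonnegative kernel of total mass one supported in the closed ball of radius `r`. -/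
structure IsMollifier {m : ℕ} (k : EuclideanSpace ℝ (Fin m) → ℝ) (r : ℝ) : Prop where
  contDiff : ContDiff ℝ (⊤ : ℕ∞) k
  support_subset : Function.support k ⊆ closedBall 0 r
  nonneg : ∀ z, 0 ≤ k z
  integral_eq_one : ∫ z, k z = 1

namespace IsMollifier

variable {m : ℕ} {k : EuclideanSpace ℝ (Fin m) → ℝ} {r : ℝ}

theorem tsupport_subset (hk : IsMollifier k r) : tsupport k ⊆ closedBall 0 r :=
  closure_minimal hk.support_subset isClosed_closedBall

theorem hasCompactSupport (hk : IsMollifier k r) : HasCompactSupport k :=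
  HasCompactSupport.of_support_subset_isCompact (isCompact_closedBall 0 r) hk.support_subset

theorem eq_zero (hk : IsMollifier k r) {z : EuclideanSpace ℝ (Fin m)} (hz : r < ‖z‖) :
    k z = 0 := by
  by_contra h
  have := hk.support_subset h
  rw [mem_closedBall_zero_iff] at this
  linarith

theorem fderiv_eq_zero (hk : IsMollifier k r) {z : EuclideanSpace ℝ (Fin m)} (hz : r < ‖z‖) :
    fderiv ℝ k z = 0 := by
  by_contra h
  have := hk.tsupport_subset (support_fderiv_subset ℝ h)
  rw [mem_closedBall_zero_iff] at this
  linarith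

theorem integrable (hk : IsMollifier k r) : Integrable k :=
  hk.contDiff.continuous.integrable_of_hasCompactSupport hk.hasCompactSupport

theorem continuous_fderiv (hk : IsMollifier k r) : Continuous (fderiv ℝ k) :=
  hk.contDiff.continuous_fderiv (by simp)

theorem integrable_norm_fderiv (hk : IsMollifier k r) :
    Integrable fun z => ‖fderiv ℝ k z‖ :=
  (hk.continuous_fderiv.integrable_of_hasCompactSupport (hk.hasCompactSupport.fderiv ℝ)).norm

/-- The rescaled kernel `z ↦ ε⁻ᵐ k(z / ε)`. -/
theorem rescale (hk : IsMollifier k 1) {ε : ℝ} (hε : 0 < ε) :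
    IsMollifier (fun z => (ε ^ m)⁻¹ * k (ε⁻¹ • z)) ε where
  contDiff := contDiff_const.mul (hk.contDiff.comp (contDiff_const_smul _))
  support_subset := by
    intro z hz
    have h1 : k (ε⁻¹ • z) ≠ 0 := right_ne_zero_of_mul hz
    have h2 := hk.support_subset h1
    rw [mem_closedBall_zero_iff, norm_smul, norm_inv, Real.norm_of_nonneg hε.le,
      inv_mul_le_iff₀ hε, mul_one] at h2
    rwa [mem_closedBall_zero_iff]
  nonneg := fun z => mul_nonneg (by positivity) (hk.nonneg _)
  integral_eq_one := by
    rw [integral_const_mul, Measure.integral_comp_inv_smul_of_nonneg _ _ hε.le,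
      hk.integral_eq_one, finrank_euclideanSpace_fin, smul_eq_mul, mul_one,
      inv_mul_cancel₀ (by positivity)]

theorem integral_norm_fderiv_rescale (hk : IsMollifier k 1) {ε : ℝ} (hε : 0 < ε) :
    ∫ z, ‖fderiv ℝ (fun z => (ε ^ m)⁻¹ * k (ε⁻¹ • z)) z‖ = ε⁻¹ * ∫ z, ‖fderiv ℝ k z‖ := by
  have h : ∀ z, ‖fderiv ℝ (fun z => (ε ^ m)⁻¹ * k (ε⁻¹ • z)) z‖ =
      ((ε ^ m)⁻¹ * ε⁻¹) * ‖fderiv ℝ k (ε⁻¹ • z)‖ := by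
    intro z
    have hd : DifferentiableAt ℝ k (ε⁻¹ • z) := hk.contDiff.differentiable (by simp) _
    rw [fderiv_const_mul (by fun_prop), fderiv_comp_smul, norm_smul, norm_smul,
      Real.norm_of_nonneg (by positivity), Real.norm_of_nonneg (by positivity), mul_assoc]
  simp only [h]
  rw [integral_const_mul,
    Measure.integral_comp_inv_smul_of_nonneg volume (fun z => ‖fderiv ℝ k z‖) hε.le,
    finrank_euclideanSpace_fin, smul_eq_mul]
  field_simp

variable {F : Type*} [NormedAddCommGroup F] [NormedSpace ℝ F]
  {g : EuclideanSpace ℝ (Fin m) → F}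

theorem contDiff_convolution (hk : IsMollifier k r) (hg : Continuous g) :
    ContDiff ℝ (⊤ : ℕ∞) fun p => ∫ z, k z • g (p - z) :=
  hk.hasCompactSupport.contDiff_convolution_left (ContinuousLinearMap.lsmul ℝ ℝ) hk.contDiff
    hg.locallyIntegrable

theorem integrable_smul (hk : IsMollifier k r) (hg : Continuous g)
    (x : EuclideanSpace ℝ (Fin m)) : Integrable fun z => k z • g (x - z) :=
  (hk.contDiff.continuous.smul (by fun_prop)).integrable_of_hasCompactSupport
    hk.hasCompactSupport.smul_right

theorem integrable_fderiv_smul (hk : IsMollifier k r) (hg : Continuous g)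
    (x v : EuclideanSpace ℝ (Fin m)) : Integrable fun z => fderiv ℝ k z v • g (x - z) :=
  ((hk.continuous_fderiv.clm_apply continuous_const).smul
    (by fun_prop)).integrable_of_hasCompactSupport
      (((hk.hasCompactSupport.fderiv ℝ).comp_left
        (g := fun L : EuclideanSpace ℝ (Fin m) →L[ℝ] ℝ => L v) rfl).smul_right)

theorem fderiv_convolution (hk : IsMollifier k r) (hg : Continuous g)
    (x v : EuclideanSpace ℝ (Fin m)) :
    fderiv ℝ (fun p => ∫ z, k z • g (p - z)) x v = ∫ z, fderiv ℝ k z v • g (x - z) := by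
  have h := hk.hasCompactSupport.hasFDerivAt_convolution_left (ContinuousLinearMap.lsmul ℝ ℝ)
    (hk.contDiff.of_le (by simp)) hg.locallyIntegrable (μ := volume) x
  have h' := h.fderiv
  change fderiv ℝ (fun p => ∫ z, k z • g (p - z)) x = _ at h'
  rw [h', convolution, ContinuousLinearMap.integral_apply]
  · simp
  · exact (hk.hasCompactSupport.fderiv ℝ).convolutionExists_left _ hk.continuous_fderiv
      hg.locallyIntegrable x

theorem fderiv_convolution_sub [CompleteSpace F] (hk : IsMollifier k r) (hg : Continuous g)
    (x v : EuclideanSpace ℝ (Fin m)) :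
    fderiv ℝ (fun p => ∫ z, k z • g (p - z)) x v =
      ∫ z, fderiv ℝ k z v • (g (x - z) - g x) := by
  have hc := hk.fderiv_convolution (continuous_const (y := g x)) x v
  simp only [integral_smul_const, hk.integral_eq_one, one_smul] at hc
  rw [fderiv_fun_const, ← integral_smul_const] at hc
  simp only [smul_sub]
  rw [hk.fderiv_convolution hg, integral_sub (hk.integrable_fderiv_smul hg x v)
    (hk.integrable_fderiv_smul continuous_const x v), ← hc]
  simp

variable {H γ : ℝ}

theorem dist_convolution_le [CompleteSpace F] (hk : IsMollifier k r) (hg : Continuous g)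
    (hH : 0 ≤ H) (hγ : 0 ≤ γ) (hgH : ∀ x y, dist (g x) (g y) ≤ H * dist x y ^ γ)
    (x : EuclideanSpace ℝ (Fin m)) :
    dist (∫ z, k z • g (x - z)) (g x) ≤ H * r ^ γ := by
  have h1 : ∫ z, k z • g x = g x := by rw [integral_smul_const, hk.integral_eq_one, one_smul]
  rw [dist_eq_norm]
  conv_lhs => rw [← h1]
  rw [← integral_sub (hk.integrable_smul hg x) (hk.integrable.smul_const _)]
  have : ∫ z, k z * (H * r ^ γ) = H * r ^ γ := by
    rw [integral_mul_const, hk.integral_eq_one, one_mul]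
  rw [← this]
  refine norm_integral_le_of_norm_le (hk.integrable.mul_const _) (.of_forall fun z => ?_)
  rw [← smul_sub, norm_smul, Real.norm_of_nonneg (hk.nonneg z)]
  by_cases hz : r < ‖z‖
  · simp [hk.eq_zero hz]
  · refine mul_le_mul_of_nonneg_left ?_ (hk.nonneg z)
    rw [← dist_eq_norm]
    refine (hgH _ _).trans ?_
    gcongr
    simpa using hz

theorem dist_convolution_convolution_le [CompleteSpace F] (hk : IsMollifier k r) (hg : Continuous g)
    (hgH : ∀ x y, dist (g x) (g y) ≤ H * dist x y ^ γ) (x y : EuclideanSpace ℝ (Fin m)) :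
    dist (∫ z, k z • g (x - z)) (∫ z, k z • g (y - z)) ≤ H * dist x y ^ γ := by
  rw [dist_eq_norm, ← integral_sub (hk.integrable_smul hg x) (hk.integrable_smul hg y)]
  have : ∫ z, k z * (H * dist x y ^ γ) = H * dist x y ^ γ := by
    rw [integral_mul_const, hk.integral_eq_one, one_mul]
  rw [← this]
  refine norm_integral_le_of_norm_le (hk.integrable.mul_const _) (.of_forall fun z => ?_)
  rw [← smul_sub, norm_smul, Real.norm_of_nonneg (hk.nonneg z)]
  refine mul_le_mul_of_nonneg_left ?_ (hk.nonneg z)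
  rw [← dist_eq_norm]
  simpa using hgH (x - z) (y - z)

theorem norm_integral_fderiv_smul_le (hk : IsMollifier k r) {u : EuclideanSpace ℝ (Fin m) → F}
    {B : ℝ} (hu : ∀ z, ‖z‖ ≤ r → ‖u z‖ ≤ B) (v : EuclideanSpace ℝ (Fin m)) :
    ‖∫ z, fderiv ℝ k z v • u z‖ ≤ B * (∫ z, ‖fderiv ℝ k z‖) * ‖v‖ := by
  rw [mul_assoc, ← integral_mul_const, ← integral_const_mul]
  refine norm_integral_le_of_norm_le ((hk.integrable_norm_fderiv.mul_const _).const_mul _)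
    (.of_forall fun z => ?_)
  by_cases hz : r < ‖z‖
  · simp [hk.fderiv_eq_zero hz]
  · rw [norm_smul, mul_comm]
    exact mul_le_mul (hu z (not_lt.1 hz)) ((fderiv ℝ k z).le_opNorm v) (norm_nonneg _)
      ((norm_nonneg _).trans (hu z (not_lt.1 hz)))

theorem norm_fderiv_convolution_le [CompleteSpace F] (hk : IsMollifier k r) (hg : Continuous g)
    (hH : 0 ≤ H) (hγ : 0 ≤ γ) (hgH : ∀ x y, dist (g x) (g y) ≤ H * dist x y ^ γ)
    (x v : EuclideanSpace ℝ (Fin m)) :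
    ‖fderiv ℝ (fun p => ∫ z, k z • g (p - z)) x v‖ ≤
      H * r ^ γ * (∫ z, ‖fderiv ℝ k z‖) * ‖v‖ := by
  rw [hk.fderiv_convolution_sub hg]
  refine hk.norm_integral_fderiv_smul_le (fun z hz => ?_) v
  rw [← dist_eq_norm]
  refine (hgH _ _).trans ?_
  gcongr
  simpa using hz

end IsMollifier

theorem inner_pullA (n m : ℕ) {g : EuclideanSpace ℝ (Fin m) → EuclideanSpace ℝ (Fin (2*n+1))}
    {p : EuclideanSpace ℝ (Fin m)} (hg : DifferentiableAt ℝ g p)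
    (v : EuclideanSpace ℝ (Fin m)) :
    ⟪pullA n m g p, v⟫ = contactForm n (g p) (fderiv ℝ g p v) := by
  have h : ∀ i, ⟪gradient (fun q => g q i) p, v⟫ = fderiv ℝ g p v i := fun i => by
    rw [gradient, InnerProductSpace.toDual_symm_apply]
    have := ((EuclideanSpace.proj (𝕜 := ℝ) i).hasFDerivAt.comp p hg.hasFDerivAt).fderiv
    exact congrArg (fun L => L v) this
  rw [pullA, contactForm_apply, symplecticForm_apply, inner_add_left, h, real_inner_smul_left,
    sum_inner]
  simp only [inner_sub_left, real_inner_smul_left, h]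

theorem pullA_congr (n m : ℕ) {g g' : EuclideanSpace ℝ (Fin m) → EuclideanSpace ℝ (Fin (2*n+1))}
    {p : EuclideanSpace ℝ (Fin m)} (h : g =ᶠ[𝓝 p] g') : pullA n m g p = pullA n m g' p := by
  have hgrad : ∀ i, gradient (fun q => g q i) p = gradient (fun q => g' q i) p := fun i => by
    have : (fun q => g q i) =ᶠ[𝓝 p] fun q => g' q i := h.mono fun q hq => by simp only [hq]
    rw [gradient, gradient, this.fderiv_eq]
  simp only [pullA, hgrad, h.eq_of_nhds]

/-- If `g` is `γ`-Hölder both for the Euclidean and for the Korányi metric, then its mollification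
at scale `ε` pulls the contact form back to a form of size `O(ε ^ (2γ - 1))`. -/
theorem norm_pullA_mollify_le {m n : ℕ} {γ H B ε : ℝ} (hγ : 0 ≤ γ) (hH : 0 ≤ H) (hB : 0 ≤ B)
    {g : EuclideanSpace ℝ (Fin m) → EuclideanSpace ℝ (Fin (2*n+1))} (hg : Continuous g)
    (hgH : ∀ x y, dist (g x) (g y) ≤ H * dist x y ^ γ)
    (hgB : ∀ x y, |contactForm n (g y) (g x - g y)| ≤ B * dist x y ^ (2 * γ))
    {η : EuclideanSpace ℝ (Fin m) → ℝ} (hη : IsMollifier η 1) (hε : 0 < ε)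
    (x : EuclideanSpace ℝ (Fin m)) :
    ‖pullA n m (mollify m (2*n+1) η ε g) x‖ ≤
      (B + 4 * n * H ^ 2) * (∫ z, ‖fderiv ℝ η z‖) * ε ^ (2 * γ - 1) := by
  have hk := hη.rescale hε
  set N := ∫ z, ‖fderiv ℝ η z‖ with hN
  have hN0 : 0 ≤ N := integral_nonneg fun _ => norm_nonneg _
  set G := mollify m (2*n+1) η ε g with hG
  have hGdiff : Differentiable ℝ G := (hk.contDiff_convolution hg).differentiable (by simp)
  have hεpow : ε ^ (2 * γ) * ε⁻¹ = ε ^ (2 * γ - 1) := by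
    rw [Real.rpow_sub hε, Real.rpow_one, div_eq_mul_inv]
  have hεsq : ε ^ γ * ε ^ γ = ε ^ (2 * γ) := by rw [two_mul, Real.rpow_add hε]
  have hbound : ∀ v, |⟪pullA n m G x, v⟫| ≤
      (B + 4 * n * H ^ 2) * N * ε ^ (2 * γ - 1) * ‖v‖ := by
    intro v
    rw [inner_pullA n m (hGdiff x)]
    have hD := hk.norm_fderiv_convolution_le hg hH hγ hgH x v
    rw [hη.integral_norm_fderiv_rescale hε] at hD
    have hd := hk.dist_convolution_le hg hH hγ hgH x
    rw [dist_eq_norm] at hd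
    have h1 : |contactForm n (g x) (fderiv ℝ G x v)| ≤ B * ε ^ (2 * γ) * (ε⁻¹ * N) * ‖v‖ := by
      have hcomm := (contactForm n (g x)).integral_comp_comm
        ((hk.integrable_fderiv_smul hg x v).sub
          (hk.integrable_fderiv_smul (continuous_const (y := g x)) x v))
      simp only [Pi.sub_apply, ← smul_sub, map_smul] at hcomm
      have hGv : fderiv ℝ G x v = _ := hk.fderiv_convolution_sub hg x v
      rw [hGv, ← hcomm, ← hη.integral_norm_fderiv_rescale hε, ← Real.norm_eq_abs]
      refine hk.norm_integral_fderiv_smul_le (fun z hz => ?_) v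
      refine (hgB _ _).trans ?_
      gcongr
      simpa using hz
    have h2 : |symplecticForm n (G x - g x) (fderiv ℝ G x v)| ≤
        4 * n * (H * ε ^ γ) * (H * ε ^ γ * (ε⁻¹ * N) * ‖v‖) :=
      (abs_symplecticForm_le _ _ _).trans (by gcongr <;> assumption)
    have h3 := contactForm_sub_contactForm n (G x) (g x) (fderiv ℝ G x v)
    calc |contactForm n (G x) (fderiv ℝ G x v)|
        = |contactForm n (g x) (fderiv ℝ G x v)
            + symplecticForm n (G x - g x) (fderiv ℝ G x v)| := by rw [← h3]; congr 1; ring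
      _ ≤ B * ε ^ (2 * γ) * (ε⁻¹ * N) * ‖v‖
            + 4 * n * (H * ε ^ γ) * (H * ε ^ γ * (ε⁻¹ * N) * ‖v‖) :=
          (abs_add_le _ _).trans (add_le_add h1 h2)
      _ = B * (ε ^ (2 * γ) * ε⁻¹) * N * ‖v‖
            + 4 * n * H ^ 2 * ((ε ^ γ * ε ^ γ) * ε⁻¹) * N * ‖v‖ := by ring
      _ = _ := by rw [hεsq, hεpow]; ring
  have hself := hbound (pullA n m G x)
  rw [real_inner_self_eq_norm_sq, abs_of_nonneg (by positivity), sq] at hself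
  rcases (norm_nonneg (pullA n m G x)).eq_or_lt with h0 | h0
  · rw [← h0]; positivity
  · exact le_of_mul_le_mul_right hself h0

/-- Along a `C¹` curve, the integral of the contact form differs from the contact form of the
increment by a quantity controlled by the `γ`-Hölder constant of the curve alone. -/
theorem exists_abs_contactForm_sub_integral_le (n : ℕ) {γ : ℝ} (hγ : 1 / 2 < γ) :
    ∃ K : ℝ, 0 ≤ K ∧ ∀ (c c' : ℝ → EuclideanSpace ℝ (Fin (2*n+1))) (L M : ℝ), 0 ≤ L →
      (∀ s, HasDerivAt c (c' s) s) → Continuous c' → (∀ s, ‖c' s‖ ≤ M) →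
      (∀ a b, dist (c a) (c b) ≤ L * |a - b| ^ γ) →
      |contactForm n (c 0) (c 1 - c 0) - ∫ s in (0:ℝ)..1, contactForm n (c s) (c' s)| ≤
        K * L ^ 2 := by
  obtain ⟨K, hK, hsew⟩ := exists_sewing_bound hγ
  refine ⟨K * (4 * n), by positivity, fun c c' L M hL hc hc' hM hLip => ?_⟩
  have hcc : Continuous c := continuous_iff_continuousAt.2 fun s => (hc s).continuousAt
  have hint : Continuous fun s => contactForm n (c s) (c' s) :=
    hcc.contactForm hc'
  have hM0 : 0 ≤ M := (norm_nonneg _).trans (hM 0)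
  have hcM : ∀ a b, ‖c a - c b‖ ≤ M * |a - b| := fun a b =>
    convex_univ.norm_image_sub_le_of_norm_hasDerivWithin_le
      (fun s _ => (hc s).hasDerivWithinAt) (fun s _ => hM s) (mem_univ b) (mem_univ a)
  obtain ⟨R, hR⟩ : ∃ R : ℝ → ℝ → ℝ, ∀ a b, R a b = contactForm n (c a) (c b - c a)
      - ∫ s in a..b, contactForm n (c s) (c' s) := ⟨_, fun _ _ => rfl⟩
  have := hsew R (4 * n * L ^ 2) (4 * n * M ^ 2) (by positivity) ?_ ?_ 0 1 zero_le_one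
  · rw [hR, sub_zero, Real.one_rpow, mul_one] at this
    exact this.trans_eq (by ring)
  · intro a b hab
    rw [hR, hR, hR]
    have hadd := intervalIntegral.integral_add_adjacent_intervals
      (hint.intervalIntegrable a ((a + b) / 2)) (hint.intervalIntegrable ((a + b) / 2) b)
      (μ := volume)
    have hch := contactForm_chain n (c a) (c ((a + b) / 2)) (c b)
    have hLa := hLip a ((a + b) / 2)
    have hLb := hLip b ((a + b) / 2)
    have ha : |a - (a + b) / 2| ≤ b - a := by rw [abs_le]; constructor <;> linarith
    have hb : |b - (a + b) / 2| ≤ b - a := by rw [abs_le]; constructor <;> linarith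
    rw [dist_eq_norm] at hLa hLb
    calc _ = |symplecticForm n (c a - c ((a + b) / 2)) (c b - c ((a + b) / 2))| := by
          rw [← hch, ← hadd]; congr 1; ring
      _ ≤ 4 * n * (L * (b - a) ^ γ) * (L * (b - a) ^ γ) := by
          refine (abs_symplecticForm_le _ _ _).trans ?_
          gcongr
          · exact hLa.trans (by gcongr)
          · exact hLb.trans (by gcongr)
      _ = 4 * n * L ^ 2 * (b - a) ^ (2 * γ) := by
          rw [mul_comm 2 γ, Real.rpow_mul (by linarith), Real.rpow_two]; ring
  · intro a b hab
    rw [hR]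
    have hca : Continuous fun s => contactForm n (c a) (c' s) :=
      (contactForm n (c a)).continuous.comp hc'
    have h1 : contactForm n (c a) (c b - c a) = ∫ s in a..b, contactForm n (c a) (c' s) := by
      rw [map_sub, intervalIntegral.integral_eq_sub_of_hasDerivAt
        (f := fun s => contactForm n (c a) (c s))
        (fun s _ => (contactForm n (c a)).hasFDerivAt.comp_hasDerivAt s (hc s))
        (hca.intervalIntegrable a b)]
    rw [h1, ← intervalIntegral.integral_sub (hca.intervalIntegrable a b)
      (hint.intervalIntegrable a b), ← Real.norm_eq_abs]
    refine (intervalIntegral.norm_integral_le_of_norm_le_const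
      (C := 4 * n * (M * (b - a)) * M) fun s hs => ?_).trans (le_of_eq ?_)
    · rw [uIoc_of_le hab] at hs
      rw [contactForm_sub_contactForm, Real.norm_eq_abs]
      refine (abs_symplecticForm_le _ _ _).trans ?_
      gcongr
      · refine (hcM a s).trans ?_
        gcongr
        rw [abs_le]; constructor <;> linarith [hs.1, hs.2]
      · exact hM s
    · rw [abs_of_nonneg (by linarith)]; ring

theorem integrable_restrict_uIoc_prod {X : Type*} [TopologicalSpace X] [SecondCountableTopology X]
    [T2Space X] [MeasurableSpace X] [BorelSpace X] {μ : Measure X} [SFinite μ]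
    [IsFiniteMeasureOnCompacts μ] {F : ℝ × X → ℝ} (hF : Continuous F) {K : Set X}
    (hK : IsCompact K) {a b : ℝ} (h0 : ∀ s ∈ uIcc a b, ∀ x ∉ K, F (s, x) = 0) :
    Integrable F ((volume.restrict (uIoc a b)).prod μ) := by
  have h1 : (volume.restrict (uIoc a b)).prod μ =
      ((volume : Measure ℝ).prod μ).restrict (uIoc a b ×ˢ univ) := by
    rw [← Measure.prod_restrict, Measure.restrict_univ]
  rw [h1]
  refine IntegrableOn.of_forall_sdiff_eq_zero
    (hF.continuousOn.integrableOn_compact ((isCompact_uIcc (a := a) (b := b)).prod hK))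
    (measurableSet_uIoc.prod .univ) ?_
  rintro ⟨s, x⟩ ⟨hs, hx⟩
  have hs' : s ∈ uIcc a b := uIoc_subset_uIcc hs.1
  exact h0 s hs' x fun hxK => hx ⟨hs', hxK⟩

/-- The set swept out by translating `S` by the vectors `s • v`, `s ∈ [0, 1]`. -/
theorem isCompact_sweep {m : ℕ} {S : Set (EuclideanSpace ℝ (Fin m))} (hS : IsCompact S)
    (v : EuclideanSpace ℝ (Fin m)) :
    IsCompact ((fun q : ℝ × EuclideanSpace ℝ (Fin m) => q.2 + q.1 • v) '' (uIcc 0 1 ×ˢ S)) :=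
  (isCompact_uIcc.prod hS).image (by fun_prop)

theorem integral_mul_lineIntegral {m : ℕ} {A ψ : EuclideanSpace ℝ (Fin m) → ℝ}
    (hA : Continuous A) (hψ : Continuous ψ) (hψc : HasCompactSupport ψ)
    (v : EuclideanSpace ℝ (Fin m)) :
    ∫ x, ψ x * ∫ s in (0:ℝ)..1, A (x + s • v) =
      ∫ w, A w * ∫ s in (0:ℝ)..1, ψ (w - s • v) := by
  simp only [← intervalIntegral.integral_const_mul]
  rw [← intervalIntegral_integral_swap, ← intervalIntegral_integral_swap]
  · refine intervalIntegral.integral_congr fun s _ => ?_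
    simpa [mul_comm] using
      (integral_sub_right_eq_self (fun x => ψ x * A (x + s • v)) (s • v) (μ := volume)).symm
  · refine integrable_restrict_uIoc_prod
      (F := fun q : ℝ × EuclideanSpace ℝ (Fin m) => A q.2 * ψ (q.2 - q.1 • v))
      (by fun_prop) (isCompact_sweep hψc v) fun s hs x hx => ?_
    refine mul_eq_zero_of_right _ (image_eq_zero_of_notMem_tsupport fun h => hx ?_)
    exact ⟨(s, x - s • v), ⟨hs, h⟩, by simp⟩
  · refine integrable_restrict_uIoc_prod
      (F := fun q : ℝ × EuclideanSpace ℝ (Fin m) => ψ q.2 * A (q.2 + q.1 • v))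
      (by fun_prop) hψc fun s _ x hx => ?_
    exact mul_eq_zero_of_left (image_eq_zero_of_notMem_tsupport hx) _

theorem contDiff_lineAverage {m : ℕ} {ψ : EuclideanSpace ℝ (Fin m) → ℝ}
    (hψ : ContDiff ℝ (⊤ : ℕ∞) ψ) (hψc : HasCompactSupport ψ) (v : EuclideanSpace ℝ (Fin m)) :
    ContDiff ℝ (⊤ : ℕ∞) fun w => ∫ s in (0:ℝ)..1, ψ (w - s • v) := by
  set μ : Measure (EuclideanSpace ℝ (Fin m)) :=
    (volume.restrict (Ioc (0:ℝ) 1)).map fun s => s • v with hμ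
  have hmeas : Measurable fun s : ℝ => s • v := by fun_prop
  have : IsFiniteMeasure μ := by rw [hμ]; infer_instance
  have h := hψc.contDiff_convolution_right (ContinuousLinearMap.lsmul ℝ ℝ) (μ := μ)
    (f := fun _ => (1:ℝ)) (integrable_const _).locallyIntegrable hψ
  convert h using 2 with w
  simp only [convolution, ContinuousLinearMap.lsmul_apply, one_smul]
  rw [hμ, integral_map hmeas.aemeasurable, intervalIntegral.integral_of_le zero_le_one]
  exact (hψ.continuous.comp (by fun_prop)).aestronglyMeasurable

theorem lineAverage_eq_zero {m : ℕ} {ψ : EuclideanSpace ℝ (Fin m) → ℝ}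
    (v : EuclideanSpace ℝ (Fin m)) {w : EuclideanSpace ℝ (Fin m)}
    (hw : w ∉ (fun q : ℝ × EuclideanSpace ℝ (Fin m) => q.2 + q.1 • v) ''
      (uIcc 0 1 ×ˢ tsupport ψ)) :
    ∫ s in (0:ℝ)..1, ψ (w - s • v) = 0 := by
  refine (intervalIntegral.integral_congr (g := fun _ => (0:ℝ)) fun s hs => ?_).trans (by simp)
  exact image_eq_zero_of_notMem_tsupport fun h => hw ⟨(s, w - s • v), ⟨hs, h⟩, by simp⟩

theorem tendsto_mollify {m d : ℕ} {γ H : ℝ} (hγ : 0 < γ) (hH : 0 ≤ H)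
    {g : EuclideanSpace ℝ (Fin m) → EuclideanSpace ℝ (Fin d)} (hg : Continuous g)
    (hgH : ∀ x y, dist (g x) (g y) ≤ H * dist x y ^ γ)
    {η : EuclideanSpace ℝ (Fin m) → ℝ} (hη : IsMollifier η 1) (x : EuclideanSpace ℝ (Fin m)) :
    Filter.Tendsto (fun q : ℝ × EuclideanSpace ℝ (Fin m) => mollify m d η q.1 g q.2)
      (𝓝[>] 0 ×ˢ 𝓝 x) (𝓝 (g x)) := by
  rw [tendsto_iff_dist_tendsto_zero]
  have h1 : Filter.Tendsto (fun q : ℝ × EuclideanSpace ℝ (Fin m) =>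
      H * q.1 ^ γ + dist (g q.2) (g x)) (𝓝[>] 0 ×ˢ 𝓝 x) (𝓝 0) := by
    have hc : Continuous fun q : ℝ × EuclideanSpace ℝ (Fin m) =>
        H * q.1 ^ γ + dist (g q.2) (g x) :=
      ((continuous_fst.rpow_const fun _ => Or.inr hγ.le).const_mul H).add (by fun_prop)
    have := hc.tendsto (0, x)
    simp only [Real.zero_rpow hγ.ne', mul_zero, dist_self, add_zero, nhds_prod_eq] at this
    exact this.mono_left (Filter.prod_mono nhdsWithin_le_nhds le_rfl)
  refine squeeze_zero' (.of_forall fun _ => dist_nonneg) ?_ h1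
  have hpos : ∀ᶠ q : ℝ × EuclideanSpace ℝ (Fin m) in 𝓝[>] 0 ×ˢ 𝓝 x, 0 < q.1 :=
    Filter.Eventually.prod_inl self_mem_nhdsWithin _
  filter_upwards [hpos] with q hq
  refine (dist_triangle _ (g q.2) _).trans ?_
  gcongr
  exact (hη.rescale hq).dist_convolution_le hg hH hγ.le hgH q.2

/-- For a `γ`-Hölder map with `γ > 1/2`, the contact form of an increment is recovered, up to an
error of order `‖v‖ ^ (2γ)`, from the line integral of the pullback by a mollification, uniformly
in the scale of the mollification. -/
theorem exists_abs_contactForm_mollify_sub_le (n : ℕ) {γ : ℝ} (hγ : 1 / 2 < γ) :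
    ∃ K : ℝ, 0 ≤ K ∧ ∀ (m : ℕ) (H : ℝ), 0 ≤ H →
      ∀ g : EuclideanSpace ℝ (Fin m) → EuclideanSpace ℝ (Fin (2*n+1)), Continuous g →
      (∀ x y, dist (g x) (g y) ≤ H * dist x y ^ γ) →
      ∀ η : EuclideanSpace ℝ (Fin m) → ℝ, IsMollifier η 1 → ∀ ε : ℝ, 0 < ε →
      ∀ x v : EuclideanSpace ℝ (Fin m),
      |contactForm n (mollify m (2*n+1) η ε g x)
          (mollify m (2*n+1) η ε g (x + v) - mollify m (2*n+1) η ε g x)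
        - ∫ s in (0:ℝ)..1, contactForm n (mollify m (2*n+1) η ε g (x + s • v))
          (fderiv ℝ (mollify m (2*n+1) η ε g) (x + s • v) v)| ≤
        K * H ^ 2 * ‖v‖ ^ (2 * γ) := by
  obtain ⟨K, hK, hcurve⟩ := exists_abs_contactForm_sub_integral_le n hγ
  refine ⟨K, hK, fun m H hH g hg hgH η hη ε hε x v => ?_⟩
  have hk := hη.rescale hε
  set G := mollify m (2*n+1) η ε g with hG
  have hGsmooth : ContDiff ℝ (⊤ : ℕ∞) G := hk.contDiff_convolution hg
  have hline : ∀ s : ℝ, HasDerivAt (fun s : ℝ => x + s • v) v s := fun s => by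
    simpa using ((hasDerivAt_id s).smul_const v).const_add x
  have h := hcurve (fun s => G (x + s • v)) (fun s => fderiv ℝ G (x + s • v) v) (H * ‖v‖ ^ γ)
    _ (by positivity)
    (fun s => (hGsmooth.differentiable (by simp) _).hasFDerivAt.comp_hasDerivAt s (hline s))
    (((hGsmooth.continuous_fderiv (by simp)).comp (by fun_prop)).clm_apply continuous_const)
    (fun s => hk.norm_fderiv_convolution_le hg hH (by linarith) hgH (x + s • v) v)
    (fun a b => by
      refine (hk.dist_convolution_convolution_le hg hgH _ _).trans (le_of_eq ?_)
      rw [dist_add_left, dist_eq_norm, ← sub_smul, norm_smul, Real.norm_eq_abs,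
        Real.mul_rpow (abs_nonneg _) (norm_nonneg _)]
      ring)
  simp only [zero_smul, add_zero, one_smul] at h
  refine h.trans (le_of_eq ?_)
  rw [mul_pow, mul_comm 2 γ, Real.rpow_mul (norm_nonneg _), Real.rpow_two]
  ring

/-- If the distributional pullback of the contact form by a `γ`-Hölder map, `γ > 1/2`, vanishes on
a convex open set, then the map satisfies the vertical part of the Korányi `γ`-Hölder estimate
there. -/
theorem exists_abs_contactForm_le_of_tendsto {m n : ℕ} {γ H : ℝ} (hγ : 1 / 2 < γ) (hH : 0 ≤ H)
    {g : EuclideanSpace ℝ (Fin m) → EuclideanSpace ℝ (Fin (2*n+1))} (hg : Continuous g)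
    (hgH : ∀ x y, dist (g x) (g y) ≤ H * dist x y ^ γ)
    {η : EuclideanSpace ℝ (Fin m) → ℝ} (hη : IsMollifier η 1)
    {U : Set (EuclideanSpace ℝ (Fin m))} (hU : IsOpen U) (hUc : Convex ℝ U)
    (hlim : ∀ Φ : EuclideanSpace ℝ (Fin m) → EuclideanSpace ℝ (Fin m),
      ContDiff ℝ (⊤ : ℕ∞) Φ → HasCompactSupport Φ → tsupport Φ ⊆ U →
      Filter.Tendsto (fun ε : ℝ => ∫ x, ⟪pullA n m (mollify m (2*n+1) η ε g) x, Φ x⟫)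
        (𝓝[>] 0) (𝓝 0)) :
    ∃ B : ℝ, 0 ≤ B ∧ ∀ x ∈ U, ∀ y ∈ U,
      |contactForm n (g y) (g x - g y)| ≤ B * dist x y ^ (2 * γ) := by
  obtain ⟨K, hK, hline⟩ := exists_abs_contactForm_mollify_sub_le n hγ
  refine ⟨K * H ^ 2, by positivity, fun x hx y hy => ?_⟩
  set v := x - y with hv
  have hxv : x = y + v := by rw [hv]; abel
  rw [dist_eq_norm, ← hv]
  set Q := K * H ^ 2 * ‖v‖ ^ (2 * γ) with hQ
  set P := contactForm n (g y) (g x - g y) with hP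
  refine le_of_forall_pos_le_add fun δ hδ => ?_
  -- the contact form of the mollified increments is close to `P` at small scales near `y`
  have hP_lim : Filter.Tendsto (fun q : ℝ × EuclideanSpace ℝ (Fin m) =>
      contactForm n (mollify m (2*n+1) η q.1 g q.2)
        (mollify m (2*n+1) η q.1 g (q.2 + v) - mollify m (2*n+1) η q.1 g q.2))
      (𝓝[>] 0 ×ˢ 𝓝 y) (𝓝 P) := by
    have h1 := tendsto_mollify (by linarith) hH hg hgH hη y
    have hshift : Filter.Tendsto (fun q : ℝ × EuclideanSpace ℝ (Fin m) => (q.1, q.2 + v))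
        (𝓝[>] 0 ×ˢ 𝓝 y) (𝓝[>] 0 ×ˢ 𝓝 x) := by
      rw [hxv]
      exact Filter.tendsto_fst.prodMk (((continuous_add_const v).tendsto y).comp Filter.tendsto_snd)
    have h2 := (tendsto_mollify (by linarith) hH hg hgH hη x).comp hshift
    have hcont : Continuous fun q : EuclideanSpace ℝ (Fin (2*n+1)) ×
        EuclideanSpace ℝ (Fin (2*n+1)) => contactForm n q.1 (q.2 - q.1) :=
      continuous_fst.contactForm (continuous_snd.sub continuous_fst)
    exact (hcont.tendsto (g y, g x)).comp (h1.prodMk_nhds h2)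
  obtain ⟨pa, hpa, pb, hpb, hpab⟩ :=
    Filter.eventually_prod_iff.1 (hP_lim (Metric.closedBall_mem_nhds P hδ))
  obtain ⟨ρ, hρ, hρb⟩ := Metric.eventually_nhds_iff_ball.1 hpb
  have hseg : segment ℝ y x ⊆ U := hUc.segment_subset hy hx
  have hsegc : IsCompact (segment ℝ y x) := by
    rw [segment_eq_image_lineMap]
    exact isCompact_Icc.image AffineMap.lineMap_continuous
  obtain ⟨τ, hτ, hτU⟩ := hsegc.exists_thickening_subset_open hU hseg
  let ψ : ContDiffBump y := ⟨min ρ τ / 4, min ρ τ / 2, by positivity, by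
    have : 0 < min ρ τ := lt_min hρ hτ
    linarith⟩
  have hψr : ψ.rOut < ρ ∧ ψ.rOut < τ := by
    have h0 : 0 < min ρ τ := lt_min hρ hτ
    have : ψ.rOut = min ρ τ / 2 := rfl
    constructor <;> linarith [min_le_left ρ τ, min_le_right ρ τ]
  have hψs : ContDiff ℝ (⊤ : ℕ∞) ψ := ψ.contDiff
  have hψi : Integrable ψ := ψ.integrable
  set Ψ : EuclideanSpace ℝ (Fin m) → ℝ := fun w => ∫ s in (0:ℝ)..1, ψ (w - s • v) with hΨ
  set S := (fun q : ℝ × EuclideanSpace ℝ (Fin m) => q.2 + q.1 • v) ''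
    (uIcc 0 1 ×ˢ tsupport ψ) with hS
  have hSc : IsCompact S := isCompact_sweep ψ.hasCompactSupport v
  have hSU : S ⊆ U := by
    rintro _ ⟨⟨s, z⟩, ⟨hs, hz⟩, rfl⟩
    rw [ψ.tsupport_eq, mem_closedBall] at hz
    rw [uIcc_of_le zero_le_one] at hs
    refine hτU (mem_thickening_iff.2 ⟨y + s • v, ?_, ?_⟩)
    · rw [segment_eq_image']
      exact ⟨s, hs, rfl⟩
    · rw [dist_add_right]
      exact hz.trans_lt hψr.2
  have hΦS : Function.support (fun w => Ψ w • v) ⊆ S := fun w hw => by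
    by_contra h
    exact hw (by simp only [hΨ, lineAverage_eq_zero v h, zero_smul])
  have hΦ := hlim (fun w => Ψ w • v)
    ((contDiff_lineAverage hψs ψ.hasCompactSupport v).smul contDiff_const)
    (.of_support_subset_isCompact hSc hΦS) ((closure_minimal hΦS hSc.isClosed).trans hSU)
  -- testing against `Ψ v` averages the line integrals with weight `ψ`
  have hest : ∀ᶠ ε in 𝓝[>] (0:ℝ),
      |P * (∫ z, ψ z) - ∫ w, ⟪pullA n m (mollify m (2*n+1) η ε g) w, Ψ w • v⟫| ≤
        (Q + δ) * ∫ z, ψ z := by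
    filter_upwards [hpa, self_mem_nhdsWithin] with ε hεa hε
    have hε : 0 < ε := hε
    set G := mollify m (2*n+1) η ε g with hG
    have hGsmooth : ContDiff ℝ (⊤ : ℕ∞) G := (hη.rescale hε).contDiff_convolution hg
    have hA : Continuous fun w => contactForm n (G w) (fderiv ℝ G w v) :=
      hGsmooth.continuous.contactForm
        ((hGsmooth.continuous_fderiv (by simp)).clm_apply continuous_const)
    have hswap : ∫ w, ⟪pullA n m G w, Ψ w • v⟫ =
        ∫ z, ψ z * ∫ s in (0:ℝ)..1, contactForm n (G (z + s • v)) (fderiv ℝ G (z + s • v) v) := by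
      rw [integral_mul_lineIntegral hA hψs.continuous ψ.hasCompactSupport v]
      refine integral_congr_ae (.of_forall fun w => ?_)
      dsimp only
      rw [real_inner_smul_right, inner_pullA n m (hGsmooth.differentiable (by simp) w), mul_comm]
    have hAi : Continuous fun z => ∫ s in (0:ℝ)..1,
        contactForm n (G (z + s • v)) (fderiv ℝ G (z + s • v) v) :=
      intervalIntegral.continuous_parametric_intervalIntegral_of_continuous'
        (f := fun z s => contactForm n (G (z + s • v)) (fderiv ℝ G (z + s • v) v))
        (hA.comp (g := fun w => contactForm n (G w) (fderiv ℝ G w v))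
          (f := fun q : EuclideanSpace ℝ (Fin m) × ℝ => q.1 + q.2 • v) (by fun_prop)) 0 1
    have hψAi : Integrable fun z => ψ z * ∫ s in (0:ℝ)..1,
        contactForm n (G (z + s • v)) (fderiv ℝ G (z + s • v) v) :=
      (hψs.continuous.mul hAi).integrable_of_hasCompactSupport ψ.hasCompactSupport.mul_right
    rw [hswap, mul_comm P, ← integral_mul_const, ← integral_sub (hψi.mul_const P) hψAi,
      mul_comm (Q + δ), ← integral_mul_const, ← Real.norm_eq_abs]
    refine norm_integral_le_of_norm_le (hψi.mul_const _) (.of_forall fun z => ?_)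
    rw [← mul_sub, norm_mul, Real.norm_of_nonneg ψ.nonneg]
    by_cases hz : z ∈ ball y ρ
    · refine mul_le_mul_of_nonneg_left ?_ ψ.nonneg
      have h1 := hline m H hH g hg hgH η hη ε hε z v
      have h2 := hpab hεa (hρb z hz)
      rw [mem_closedBall, dist_comm, Real.dist_eq] at h2
      rw [Real.norm_eq_abs]
      calc _ ≤ _ := abs_sub_le _ _ _
        _ ≤ δ + Q := add_le_add h2 h1
        _ = Q + δ := add_comm _ _
    · have : ψ z = 0 := ψ.zero_of_le_dist (by
        rw [mem_ball, not_lt] at hz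
        linarith [hψr.1])
      simp [this]
  have hfin := le_of_tendsto ((tendsto_const_nhds.sub hΦ).abs) hest
  have hpos : 0 < ∫ z, ψ z := ψ.integral_pos
  rw [sub_zero, abs_mul, abs_of_pos hpos] at hfin
  exact le_of_mul_le_mul_right hfin hpos

/-- Clamping the coordinates retracts `ℝ^m` onto a box without increasing distances. -/
theorem exists_retraction_ball {m : ℕ} (p : EuclideanSpace ℝ (Fin m)) {r : ℝ} (hr : 0 < r) :
    ∃ a : ℝ, 0 < a ∧ ∃ ρ : EuclideanSpace ℝ (Fin m) → EuclideanSpace ℝ (Fin m),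
      (∀ x y, dist (ρ x) (ρ y) ≤ dist x y) ∧ (∀ x, ρ x ∈ ball p r) ∧
      ∀ x ∈ ball p a, ρ x = x := by
  set a := r / (m + 1) with ha
  have ha0 : 0 < a := by positivity
  have har : (m + 1) * a = r := by rw [ha]; field_simp
  refine ⟨a, ha0, fun x => WithLp.toLp 2 fun i => max (p i - a) (min (p i + a) (x i)),
    fun x y => ?_, fun x => ?_, fun x hx => ?_⟩
  · rw [EuclideanSpace.dist_eq, EuclideanSpace.dist_eq]
    refine Real.sqrt_le_sqrt (Finset.sum_le_sum fun i _ => ?_)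
    refine pow_le_pow_left₀ dist_nonneg ?_ 2
    rw [Real.dist_eq, Real.dist_eq]
    have h1 := abs_max_sub_max_le_max (p i - a) (min (p i + a) (x i)) (p i - a)
      (min (p i + a) (y i))
    have h2 := abs_min_sub_min_le_max (p i + a) (x i) (p i + a) (y i)
    simp only [sub_self, abs_zero, abs_nonneg, max_eq_right] at h1 h2
    exact h1.trans h2
  · rw [mem_ball, EuclideanSpace.dist_eq]
    have hsum : ∑ i, dist (max (p i - a) (min (p i + a) (x i))) (p i) ^ 2 ≤ m * a ^ 2 := by
      have hi : ∀ i ∈ (Finset.univ : Finset (Fin m)),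
          dist (max (p i - a) (min (p i + a) (x i))) (p i) ^ 2 ≤ a ^ 2 := fun i _ => by
        refine pow_le_pow_left₀ dist_nonneg ?_ 2
        rw [Real.dist_eq, abs_le]
        constructor
        · linarith [le_max_left (p i - a) (min (p i + a) (x i))]
        · have : max (p i - a) (min (p i + a) (x i)) ≤ p i + a :=
            max_le (by linarith) (min_le_left _ _)
          linarith
      simpa using Finset.sum_le_sum hi
    rw [Real.sqrt_lt' hr, ← har]
    refine hsum.trans_lt ?_
    have hm : (0:ℝ) ≤ m := by positivity
    have ha2 : 0 < a ^ 2 := by positivity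
    nlinarith [mul_nonneg hm ha2.le, mul_nonneg (mul_nonneg hm hm) ha2.le]
  · ext i
    have hi : |x i - p i| ≤ a := by
      have := PiLp.norm_apply_le (x - p) i
      rw [← dist_eq_norm] at this
      exact this.trans (mem_ball.1 hx).le
    rw [abs_le] at hi
    simp only
    rw [min_eq_right (by linarith), max_eq_right (by linarith)]

/-- The pullback by the mollification at scale `ε` only depends on the map near the point. -/
theorem pullA_mollify_congr {m n : ℕ}
    {f g : EuclideanSpace ℝ (Fin m) → EuclideanSpace ℝ (Fin (2*n+1))}
    {η : EuclideanSpace ℝ (Fin m) → ℝ} (hη : IsMollifier η 1) {x : EuclideanSpace ℝ (Fin m)}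
    {δ ε : ℝ} (hε : 0 < ε) (hεδ : ε < δ) (hfg : EqOn f g (ball x δ)) :
    pullA n m (mollify m (2*n+1) η ε f) x = pullA n m (mollify m (2*n+1) η ε g) x := by
  refine pullA_congr n m ?_
  filter_upwards [ball_mem_nhds x (sub_pos.2 hεδ)] with q hq
  refine integral_congr_ae (.of_forall fun z => ?_)
  by_cases hz : ε < ‖z‖
  · have := (hη.rescale hε).eq_zero hz
    simp only [this, zero_smul]
  · have hqz : q - z ∈ ball x δ := by
      have h1 : dist (q - z) x ≤ dist (q - z) q + dist q x := dist_triangle _ _ _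
      have h2 : dist (q - z) q = ‖z‖ := by simp
      rw [mem_ball] at hq ⊢
      linarith
    simp only [hfg hqz]

theorem continuous_of_dist_le_rpow {X Y : Type*} [PseudoMetricSpace X] [PseudoMetricSpace Y]
    {g : X → Y} {H γ : ℝ} (hγ : 0 < γ) (hg : ∀ x y, dist (g x) (g y) ≤ H * dist x y ^ γ) :
    Continuous g := by
  refine continuous_iff_continuousAt.2 fun x => tendsto_iff_dist_tendsto_zero.2 ?_
  have hc : Continuous fun y => H * dist y x ^ γ :=
    ((continuous_id.dist continuous_const).rpow_const fun _ => Or.inr hγ.le).const_mul H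
  have := hc.tendsto x
  simp only [dist_self, Real.zero_rpow hγ.ne', mul_zero] at this
  exact squeeze_zero (fun _ => dist_nonneg) (fun y => hg y x) this

/-- A map which is `γ`-Hölder near `p` agrees near `p` with a globally `γ`-Hölder map, obtained by
composing it with a distance-decreasing retraction. -/
theorem exists_retraction_holder {m d : ℕ} {γ : ℝ} (hγ : 0 < γ)
    {Ω : Set (EuclideanSpace ℝ (Fin m))} (hΩ : IsOpen Ω)
    {f : EuclideanSpace ℝ (Fin m) → EuclideanSpace ℝ (Fin d)} {p : EuclideanSpace ℝ (Fin m)}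
    (hp : p ∈ Ω) {r₀ r C : ℝ} (hr₀ : 0 < r₀) (hr : 0 < r)
    (hf : ∀ x ∈ ball p r ∩ Ω, ∀ y ∈ ball p r ∩ Ω, dist (f x) (f y) ≤ C * dist x y ^ γ) :
    ∃ a : ℝ, 0 < a ∧ ∃ ρ : EuclideanSpace ℝ (Fin m) → EuclideanSpace ℝ (Fin m),
      (∀ x y, dist (ρ x) (ρ y) ≤ dist x y) ∧ (∀ x, ρ x ∈ ball p r₀ ∩ Ω) ∧
      (∀ x ∈ ball p a, ρ x = x) ∧ Continuous (f ∘ ρ) ∧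
      ∀ x y, dist ((f ∘ ρ) x) ((f ∘ ρ) y) ≤ |C| * dist x y ^ γ := by
  obtain ⟨r', hr', hΩr⟩ := Metric.isOpen_iff.1 hΩ p hp
  obtain ⟨a, ha, ρ, hρ, hρb, hρa⟩ :=
    exists_retraction_ball p (lt_min (lt_min hr₀ hr) hr')
  have hmem : ∀ x, ρ x ∈ ball p r₀ ∧ ρ x ∈ ball p r ∧ ρ x ∈ Ω := fun x => by
    have := mem_ball.1 (hρb x)
    rw [lt_min_iff, lt_min_iff] at this
    exact ⟨this.1.1, this.1.2, hΩr this.2⟩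
  have hH : ∀ x y, dist ((f ∘ ρ) x) ((f ∘ ρ) y) ≤ |C| * dist x y ^ γ := fun x y => by
    refine (hf _ (hmem x).2 _ (hmem y).2).trans ?_
    gcongr
    · exact le_abs_self C
    · exact hρ x y
  exact ⟨a, ha, ρ, hρ, fun x => ⟨(hmem x).1, (hmem x).2.2⟩, hρa,
    continuous_of_dist_le_rpow hγ hH, hH⟩

/-- If `f` is locally `γ`-Hölder for the Euclidean and the Korányi metrics, then near every point
the pullbacks by the mollifications are `O(ε ^ (2γ - 1))`. -/
theorem exists_nhds_norm_pullA_mollify_le {m n : ℕ} {γ : ℝ} (hγ : 0 < γ)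
    {Ω : Set (EuclideanSpace ℝ (Fin m))} (hΩ : IsOpen Ω)
    {f : EuclideanSpace ℝ (Fin m) → EuclideanSpace ℝ (Fin (2*n+1))}
    {p : EuclideanSpace ℝ (Fin m)} (hp : p ∈ Ω)
    (hf : ∃ r : ℝ, 0 < r ∧ ∃ C : ℝ, ∀ x ∈ ball p r ∩ Ω, ∀ y ∈ ball p r ∩ Ω,
      dist (f x) (f y) ≤ C * dist x y ^ γ)
    (hK : ∃ r : ℝ, 0 < r ∧ ∃ C : ℝ, ∀ x ∈ ball p r ∩ Ω, ∀ y ∈ ball p r ∩ Ω,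
      dK n (f x) (f y) ≤ C * dist x y ^ γ)
    {η : EuclideanSpace ℝ (Fin m) → ℝ} (hη : IsMollifier η 1) :
    ∃ t ∈ 𝓝 p, ∃ C : ℝ, ∀ᶠ ε in 𝓝[>] (0:ℝ), ∀ x ∈ t,
      ‖pullA n m (mollify m (2*n+1) η ε f) x‖ ≤ C * ε ^ (2 * γ - 1) := by
  obtain ⟨r₁, hr₁, C₁, hC₁⟩ := hf
  obtain ⟨r₂, hr₂, C₂, hC₂⟩ := hK
  obtain ⟨a, ha, ρ, hρ, hρm, hρa, hgc, hgH⟩ := exists_retraction_holder hγ hΩ hp hr₂ hr₁ hC₁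
  have hgB : ∀ x y, |contactForm n ((f ∘ ρ) y) ((f ∘ ρ) x - (f ∘ ρ) y)| ≤
      C₂ ^ 2 * dist x y ^ (2 * γ) := fun x y => by
    have h1 : dK n (f (ρ x)) (f (ρ y)) ≤ |C₂| * dist x y ^ γ := by
      refine (hC₂ _ (hρm x) _ (hρm y)).trans ?_
      gcongr
      · exact le_abs_self _
      · exact hρ x y
    have h0 : 0 ≤ dK n (f (ρ x)) (f (ρ y)) := by rw [dK_eq]; positivity
    refine (abs_contactForm_le_dK_sq n _ _).trans ((pow_le_pow_left₀ h0 h1 2).trans_eq ?_)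
    rw [mul_pow, sq_abs, mul_comm 2 γ, Real.rpow_mul dist_nonneg, Real.rpow_two]
  refine ⟨ball p (a / 2), ball_mem_nhds p (by positivity),
    (C₂ ^ 2 + 4 * n * |C₁| ^ 2) * ∫ z, ‖fderiv ℝ η z‖, ?_⟩
  filter_upwards [self_mem_nhdsWithin, nhdsWithin_le_nhds (gt_mem_nhds (half_pos ha))]
    with ε hε hεa x hx
  have hfg : EqOn f (f ∘ ρ) (ball x (a / 2)) := fun w hw => by
    have : w ∈ ball p a := by
      rw [mem_ball] at hx hw ⊢
      linarith [dist_triangle w x p]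
    simp [hρa w this]
  rw [pullA_mollify_congr hη hε hεa hfg]
  exact norm_pullA_mollify_le hγ.le (abs_nonneg _) (sq_nonneg _) hgc hgH hgB hη hε x

theorem exists_norm_pullA_mollify_le_of_isCompact {m n : ℕ} {γ : ℝ} (hγ : 0 < γ)
    {Ω : Set (EuclideanSpace ℝ (Fin m))} (hΩ : IsOpen Ω)
    {f : EuclideanSpace ℝ (Fin m) → EuclideanSpace ℝ (Fin (2*n+1))}
    (hf : ∀ p ∈ Ω, ∃ r : ℝ, 0 < r ∧ ∃ C : ℝ, ∀ x ∈ ball p r ∩ Ω, ∀ y ∈ ball p r ∩ Ω,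
      dist (f x) (f y) ≤ C * dist x y ^ γ)
    (hK : ∀ p ∈ Ω, ∃ r : ℝ, 0 < r ∧ ∃ C : ℝ, ∀ x ∈ ball p r ∩ Ω, ∀ y ∈ ball p r ∩ Ω,
      dK n (f x) (f y) ≤ C * dist x y ^ γ)
    {η : EuclideanSpace ℝ (Fin m) → ℝ} (hη : IsMollifier η 1)
    {S : Set (EuclideanSpace ℝ (Fin m))} (hS : IsCompact S) (hSΩ : S ⊆ Ω) :
    ∃ C : ℝ, ∀ᶠ ε in 𝓝[>] (0:ℝ), ∀ x ∈ S,
      ‖pullA n m (mollify m (2*n+1) η ε f) x‖ ≤ C * ε ^ (2 * γ - 1) := by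
  refine hS.induction_on (p := fun s => ∃ C : ℝ, ∀ᶠ ε in 𝓝[>] (0:ℝ), ∀ x ∈ s,
    ‖pullA n m (mollify m (2*n+1) η ε f) x‖ ≤ C * ε ^ (2 * γ - 1)) ⟨0, by simp⟩ ?_ ?_ ?_
  · rintro s t hst ⟨C, hC⟩
    exact ⟨C, hC.mono fun ε h x hx => h x (hst hx)⟩
  · rintro s t ⟨C, hC⟩ ⟨D, hD⟩
    refine ⟨max C D, ?_⟩
    filter_upwards [hC, hD, self_mem_nhdsWithin] with ε h1 h2 hε x hx
    have hpow : 0 ≤ ε ^ (2 * γ - 1) := Real.rpow_nonneg (le_of_lt hε) _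
    rcases hx with hx | hx
    · exact (h1 x hx).trans (mul_le_mul_of_nonneg_right (le_max_left _ _) hpow)
    · exact (h2 x hx).trans (mul_le_mul_of_nonneg_right (le_max_right _ _) hpow)
  · intro p hp
    obtain ⟨t, ht, hC⟩ :=
      exists_nhds_norm_pullA_mollify_le hγ hΩ (hSΩ hp) (hf p (hSΩ hp)) (hK p (hSΩ hp)) hη
    exact ⟨t, nhdsWithin_le_nhds ht, hC⟩

/-- Theorem 8.4 of the paper. A locally `γ`-Hölder map
`f : Ω → ℝ^{2n+1}`, `1/2 < γ ≤ 1`, is locally `γ`-Hölder into `ℍ^n` iff `f^*α = 0` in the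
distributional sense. -/
theorem stmt8 (m n : ℕ) (γ : ℝ) (hγ : 1/2 < γ) (hγ1 : γ ≤ 1)
    (Ω : Set (EuclideanSpace ℝ (Fin m))) (hΩ : IsOpen Ω)
    (f : EuclideanSpace ℝ (Fin m) → EuclideanSpace ℝ (Fin (2*n+1)))
    (hf : ∀ p ∈ Ω, ∃ r : ℝ, 0 < r ∧ ∃ C : ℝ, ∀ x ∈ ball p r ∩ Ω, ∀ y ∈ ball p r ∩ Ω,
        dist (f x) (f y) ≤ C * dist x y ^ γ)
    (η : EuclideanSpace ℝ (Fin m) → ℝ)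
    (hη₁ : ContDiff ℝ (⊤ : ℕ∞) η) (hη₂ : Function.support η ⊆ closedBall 0 1)
    (hη₃ : ∀ z, 0 ≤ η z) (hη₄ : ∫ z, η z = 1) :
    (∀ p ∈ Ω, ∃ r : ℝ, 0 < r ∧ ∃ C : ℝ, ∀ x ∈ ball p r ∩ Ω, ∀ y ∈ ball p r ∩ Ω,
        dK n (f x) (f y) ≤ C * dist x y ^ γ)
    ↔
    (∀ Φ : EuclideanSpace ℝ (Fin m) → EuclideanSpace ℝ (Fin m),
      ContDiff ℝ (⊤ : ℕ∞) Φ → HasCompactSupport Φ → tsupport Φ ⊆ Ω →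
      Filter.Tendsto
        (fun ε : ℝ => ∫ x, ⟪pullA n m (mollify m (2*n+1) η ε f) x, Φ x⟫)
        (nhdsWithin 0 (Set.Ioi 0)) (nhds 0)) := by
  have hγ0 : 0 < γ := by linarith
  have hη : IsMollifier η 1 := ⟨hη₁, hη₂, hη₃, hη₄⟩
  constructor
  · intro hK Φ hΦ hΦc hΦΩ
    obtain ⟨C, hC⟩ := exists_norm_pullA_mollify_le_of_isCompact hγ0 hΩ hf hK hη hΦc hΦΩ
    have hΦi : Integrable fun x => ‖Φ x‖ :=
      (hΦ.continuous.integrable_of_hasCompactSupport hΦc).norm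
    have hlim : Filter.Tendsto (fun ε : ℝ => C * ε ^ (2 * γ - 1) * ∫ x, ‖Φ x‖) (𝓝[>] 0)
        (𝓝 0) := by
      have hc : Continuous fun ε : ℝ => C * ε ^ (2 * γ - 1) * ∫ x, ‖Φ x‖ :=
        ((continuous_id.rpow_const fun _ => Or.inr (by linarith)).const_mul C).mul_const _
      have := hc.tendsto 0
      simp only [Real.zero_rpow (show 2 * γ - 1 ≠ 0 by linarith), mul_zero, zero_mul] at this
      exact this.mono_left nhdsWithin_le_nhds
    refine squeeze_zero_norm' ?_ hlim
    filter_upwards [hC] with ε hε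
    rw [← integral_const_mul]
    refine norm_integral_le_of_norm_le (hΦi.const_mul _) (.of_forall fun x => ?_)
    by_cases hx : x ∈ tsupport Φ
    · exact (norm_inner_le_norm _ _).trans
        (mul_le_mul_of_nonneg_right (hε x hx) (norm_nonneg _))
    · simp [image_eq_zero_of_notMem_tsupport hx]
  · intro hlim p hp
    obtain ⟨r, hr, C, hC⟩ := hf p hp
    obtain ⟨a, ha, ρ, hρ, hρm, hρa, hgc, hgH⟩ := exists_retraction_holder hγ0 hΩ hp hr hr hC
    have hfg : EqOn f (f ∘ ρ) (ball p a) := fun w hw => by simp [hρa w hw]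
    have haΩ : ball p a ⊆ Ω := fun w hw => by
      have := (hρm w).2
      rwa [hρa w hw] at this
    have hlim' : ∀ Φ : EuclideanSpace ℝ (Fin m) → EuclideanSpace ℝ (Fin m),
        ContDiff ℝ (⊤ : ℕ∞) Φ → HasCompactSupport Φ → tsupport Φ ⊆ ball p a →
        Filter.Tendsto (fun ε : ℝ => ∫ x, ⟪pullA n m (mollify m (2*n+1) η ε (f ∘ ρ)) x, Φ x⟫)
          (𝓝[>] 0) (𝓝 0) := by
      intro Φ hΦ hΦc hΦp
      obtain ⟨δ, hδ, hδp⟩ := IsCompact.exists_thickening_subset_open hΦc isOpen_ball hΦp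
      refine (hlim Φ hΦ hΦc (hΦp.trans haΩ)).congr' ?_
      filter_upwards [self_mem_nhdsWithin, nhdsWithin_le_nhds (gt_mem_nhds hδ)] with ε hε hεδ
      refine integral_congr_ae (.of_forall fun x => ?_)
      by_cases hx : x ∈ tsupport Φ
      · simp only
        rw [pullA_mollify_congr hη hε hεδ
          (hfg.mono ((ball_subset_thickening hx δ).trans hδp))]
      · simp [image_eq_zero_of_notMem_tsupport hx]
    obtain ⟨B, hB, hBle⟩ := exists_abs_contactForm_le_of_tendsto hγ (abs_nonneg C) hgc hgH hη
      isOpen_ball (convex_ball p a) hlim'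
    refine ⟨a, ha, (|C| ^ 4 + B ^ 2) ^ ((1:ℝ)/4), fun x hx y hy => ?_⟩
    have h1 := hgH x y
    have h2 := hBle x hx.1 y hy.1
    rw [mul_comm 2 γ, Real.rpow_mul dist_nonneg, Real.rpow_two] at h2
    rw [← hfg hx.1, ← hfg hy.1] at h1 h2
    exact dK_le n _ _ (Real.rpow_nonneg dist_nonneg γ) h1 h2
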